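/- Let n ≥ 1, let V : ℝⁿ → ℝ be bounded, continuous and nonnegative, and let u : [0,∞) × ℝⁿ → ℝ be a smooth solution of ∂ₜ²u − Δₓu + V·u + ∂ₜu = 0 with u(0,·) = u₀ ∈ Cc^∞(ℝⁿ), ∂ₜu(0,·) = u₁ ∈ Cc^∞(ℝⁿ), such that for every T > 0 there is R > 0 with u(t,·) supported in the ball of radius R for all t ∈ [0,T]. Set I₀² := 3E(0) + ½‖u₀‖² + (u₁,u₀). Then for all t ≥ 0: ‖u(t,·)‖ ≤ 2 I₀ and ∫₀ᵗ E(s) ds ≤ I₀² + E(0). -/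

import Mathlib

open MeasureTheory

noncomputable section

/-- The Laplacian of `f : ℝⁿ → ℝ`, as the sum of second derivatives in the
coordinate directions. -/
def lap {n : ℕ} (f : EuclideanSpace ℝ (Fin n) → ℝ) (x : EuclideanSpace ℝ (Fin n)) : ℝ :=
  ∑ i : Fin n, iteratedFDeriv ℝ 2 f x ![EuclideanSpace.single i 1, EuclideanSpace.single i 1]

/-- The total energy `E(t) = ½∫ (|∂ₜu|² + |∇ₓu|² + V|u|²) dx`. -/
def energy {n : ℕ} (V : EuclideanSpace ℝ (Fin n) → ℝ)
    (u : ℝ → EuclideanSpace ℝ (Fin n) → ℝ) (t : ℝ) : ℝ :=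
  (1/2) * ∫ x, ((deriv (fun s => u s x) t) ^ 2 + ‖gradient (u t) x‖ ^ 2 + V x * (u t x) ^ 2)


lemma aux_param {X : Type*} [TopologicalSpace X] [MeasurableSpace X] [OpensMeasurableSpace X]
    [SecondCountableTopology X] [T2Space X] (μ : Measure X) [IsFiniteMeasureOnCompacts μ]
    (K : Set X) (hK : IsCompact K)
    (g g' : ℝ → X → ℝ) (hg : Continuous (Function.uncurry g))
    (hg' : Continuous (Function.uncurry g'))
    (hd : ∀ t x, HasDerivAt (fun s => g s x) (g' t x) t) (t : ℝ) :
    HasDerivAt (fun s => ∫ x in K, g s x ∂μ) (∫ x in K, g' t x ∂μ) t := by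
  have hc : IsCompact (Set.Icc (t-1) (t+1) ×ˢ K) := isCompact_Icc.prod hK
  obtain ⟨C, hC⟩ := hc.exists_bound_of_continuousOn hg'.continuousOn
  have hcx : ∀ s, Continuous (g s) := fun s => hg.comp (Continuous.prodMk_right s)
  have hcx' : ∀ s, Continuous (g' s) := fun s => hg'.comp (Continuous.prodMk_right s)
  refine (hasDerivAt_integral_of_dominated_loc_of_deriv_le (bound := fun _ => C)
    (Icc_mem_nhds (by linarith : t - 1 < t) (by linarith : t < t + 1)) ?_ ?_ ?_ ?_ ?_ ?_).2
  · exact Filter.Eventually.of_forall fun s => (hcx s).aestronglyMeasurable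
  · exact (hcx t).continuousOn.integrableOn_compact hK
  · exact (hcx' t).aestronglyMeasurable
  · filter_upwards [ae_restrict_mem hK.measurableSet] with x hx s hs
    exact hC (s, x) ⟨hs, hx⟩
  · exact integrableOn_const (hK.measure_lt_top.ne)
  · exact Filter.Eventually.of_forall fun x s _ => hd s x

section pieces

variable {n : ℕ}

local notation "X" => EuclideanSpace ℝ (Fin n)

/-- directional derivative -/
def dir {E : Type*} [NormedAddCommGroup E] [NormedSpace ℝ E] (v : E) (f : E → ℝ) : E → ℝ :=
  fun p => fderiv ℝ f p v

lemma dir_smooth {E : Type*} [NormedAddCommGroup E] [NormedSpace ℝ E] (v : E) {f : E → ℝ}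
    (hf : ContDiff ℝ (⊤ : ℕ∞) f) : ContDiff ℝ (⊤ : ℕ∞) (dir v f) :=
  (hf.fderiv_right (m := (⊤ : ℕ∞)) (by norm_cast)).clm_apply contDiff_const

lemma dir_comm {E : Type*} [NormedAddCommGroup E] [NormedSpace ℝ E] (v w : E) {f : E → ℝ}
    (hf : ContDiff ℝ (⊤ : ℕ∞) f) (p : E) : dir v (dir w f) p = dir w (dir v f) p := by
  have hd : Differentiable ℝ (fderiv ℝ f) :=
    (hf.fderiv_right (m := (⊤ : ℕ∞)) (by norm_cast)).differentiable (by simp)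
  have hs : IsSymmSndFDerivAt ℝ f p :=
    hf.contDiffAt.isSymmSndFDerivAt (by
      rw [minSmoothness_of_isRCLikeNormedField]
      exact WithTop.coe_le_coe.2 (le_top : (2 : ℕ∞) ≤ ⊤))
  have key : ∀ a b : E, dir a (dir b f) p = fderiv ℝ (fderiv ℝ f) p a b := by
    intro a b
    unfold dir
    rw [fderiv_clm_apply (hd p) (by fun_prop)]
    simp
  rw [key, key]
  exact hs v w

lemma dir_time {E : Type*} [NormedAddCommGroup E] [NormedSpace ℝ E] {f : ℝ × E → ℝ}
    (hf : ContDiff ℝ (⊤ : ℕ∞) f) (t : ℝ) (x : E) :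
    HasDerivAt (fun s => f (s, x)) (dir ((1 : ℝ), (0 : E)) f (t, x)) t := by
  have h := (hf.differentiable (by simp) (t, x)).hasFDerivAt
  exact h.comp_hasDerivAt t ((hasDerivAt_id t).prodMk (hasDerivAt_const t x))

lemma dir_space {E : Type*} [NormedAddCommGroup E] [NormedSpace ℝ E] {f : ℝ × E → ℝ}
    (hf : ContDiff ℝ (⊤ : ℕ∞) f) (t : ℝ) (x v : E) :
    fderiv ℝ (fun y => f (t, y)) x v = dir ((0 : ℝ), v) f (t, x) := by
  have h := (hf.differentiable (by simp) (t, x)).hasFDerivAt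
  have h2 := h.comp x (hasFDerivAt_prodMk_right t x)
  have h3 : fderiv ℝ (fun y => f (t, y)) x = _ := h2.fderiv
  rw [h3]
  simp [dir]

lemma grad_sq (f : X → ℝ) (x : X) :
    ‖gradient f x‖ ^ 2 = ∑ i, (fderiv ℝ f x (EuclideanSpace.single i 1)) ^ 2 := by
  rw [EuclideanSpace.real_norm_sq_eq]
  refine Finset.sum_congr rfl fun i _ => ?_
  rw [← inner_gradient_left]
  rw [EuclideanSpace.inner_single_right]
  simp

lemma lap_eq {f : ℝ × X → ℝ} (hf : ContDiff ℝ (⊤ : ℕ∞) f) (t : ℝ) (x : X) :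
    lap (fun y => f (t, y)) x =
      ∑ i, dir ((0 : ℝ), (EuclideanSpace.single i 1 : X))
        (dir ((0 : ℝ), (EuclideanSpace.single i 1 : X)) f) (t, x) := by
  unfold lap
  refine Finset.sum_congr rfl fun i _ => ?_
  have hft : ContDiff ℝ (⊤ : ℕ∞) (fun y => f (t, y)) := hf.comp (contDiff_prodMk_right t)
  have hd : Differentiable ℝ (fderiv ℝ (fun y => f (t, y))) :=
    (hft.fderiv_right (m := (⊤ : ℕ∞)) (by norm_cast)).differentiable (by simp)
  rw [iteratedFDeriv_two_apply, ← dir_space (dir_smooth _ hf)]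
  simp_rw [← dir_space hf]
  rw [fderiv_clm_apply (hd x) (by fun_prop)]
  simp

lemma int_of_supp {f : X → ℝ} (hf : Continuous f) (R : ℝ) (h : ∀ x, R ≤ ‖x‖ → f x = 0) :
    Integrable f := by
  refine hf.integrable_of_hasCompactSupport
    (HasCompactSupport.intro (isCompact_closedBall (0 : X) R) fun x hx => h x ?_)
  simp at hx
  exact hx.le

lemma set_of_supp {f : X → ℝ} (R : ℝ) (h : ∀ x, R ≤ ‖x‖ → f x = 0) :
    ∫ x in Metric.closedBall (0 : X) R, f x = ∫ x, f x := by
  refine setIntegral_eq_integral_of_forall_compl_eq_zero fun x hx => h x ?_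
  simp at hx
  exact hx.le

lemma ibp {f w : X → ℝ} (v : X) (hf : ContDiff ℝ (⊤ : ℕ∞) f) (hw : ContDiff ℝ (⊤ : ℕ∞) w)
    (R : ℝ) (h : ∀ x, R ≤ ‖x‖ → w x = 0) :
    Integrable (fun x => dir v f x * dir v w x + dir v (dir v f) x * w x) ∧
    ∫ x, (dir v f x * dir v w x + dir v (dir v f) x * w x) = 0 := by
  have h1 := dir_smooth v hf
  have h2 := dir_smooth v h1
  have h3 := dir_smooth v hw
  have i1 : Integrable (fun x => dir v (dir v f) x * w x) :=
    int_of_supp (h2.continuous.mul hw.continuous) R fun x hx => by simp [h x hx]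
  have i2 : Integrable (fun x => dir v f x * dir v w x) := by
    have hwc : HasCompactSupport w :=
      HasCompactSupport.intro (isCompact_closedBall (0 : X) R) fun x hx => h x (by
        simp at hx; exact hx.le)
    exact (h1.continuous.mul h3.continuous).integrable_of_hasCompactSupport
      ((hwc.fderiv_apply ℝ v).mul_left)
  have key : ∫ x, dir v f x * dir v w x = - ∫ x, dir v (dir v f) x * w x := by
    refine integral_mul_fderiv_eq_neg_fderiv_mul_of_integrable (f := dir v f) (g := w) (v := v)
      i1 i2 ?_ ?_ ?_
    · exact int_of_supp (h1.continuous.mul hw.continuous) R fun x hx => by simp [h x hx]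
    · exact fun x _ => h1.differentiable (by simp) x
    · exact fun x _ => hw.differentiable (by simp) x
  refine ⟨i2.add i1, ?_⟩
  rw [integral_add i2 i1, key]
  ring

/-- product-space version -/
lemma ibp2 {f w : ℝ × X → ℝ} (v : X) (hf : ContDiff ℝ (⊤ : ℕ∞) f) (hw : ContDiff ℝ (⊤ : ℕ∞) w)
    (t : ℝ) (R : ℝ) (h : ∀ x, R ≤ ‖x‖ → w (t, x) = 0) :
    Integrable (fun x => dir ((0 : ℝ), v) f (t, x) * dir ((0 : ℝ), v) w (t, x)
      + dir ((0 : ℝ), v) (dir ((0 : ℝ), v) f) (t, x) * w (t, x)) ∧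
    ∫ x, (dir ((0 : ℝ), v) f (t, x) * dir ((0 : ℝ), v) w (t, x)
      + dir ((0 : ℝ), v) (dir ((0 : ℝ), v) f) (t, x) * w (t, x)) = 0 := by
  have e1 : ∀ {g : ℝ × X → ℝ}, ContDiff ℝ (⊤ : ℕ∞) g →
      dir v (fun y => g (t, y)) = fun x => dir ((0 : ℝ), v) g (t, x) :=
    fun hg => funext fun x => dir_space hg t x v
  have H := ibp (f := fun y => f (t, y)) (w := fun y => w (t, y)) v
    (hf.comp (contDiff_prodMk_right t)) (hw.comp (contDiff_prodMk_right t)) R h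
  rw [e1 hf, e1 hw, e1 (dir_smooth _ hf)] at H
  exact H

end pieces

theorem damped_wave_L2_bound_and_energy_integral (n : ℕ) (hn : 1 ≤ n)
    (V : EuclideanSpace ℝ (Fin n) → ℝ)
    (hVcont : Continuous V) (hVbdd : ∃ M, ∀ x, |V x| ≤ M)
    (hVnonneg : ∀ x, 0 ≤ V x)
    (u : ℝ → EuclideanSpace ℝ (Fin n) → ℝ)
    (u₀ u₁ : EuclideanSpace ℝ (Fin n) → ℝ)
    (hu : ContDiff ℝ (⊤ : ℕ∞) (fun p : ℝ × EuclideanSpace ℝ (Fin n) => u p.1 p.2))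
    (hu₀smooth : ContDiff ℝ (⊤ : ℕ∞) u₀) (hu₀supp : HasCompactSupport u₀)
    (hu₁smooth : ContDiff ℝ (⊤ : ℕ∞) u₁) (hu₁supp : HasCompactSupport u₁)
    (hPDE : ∀ t, 0 ≤ t → ∀ x,
      deriv (fun s => deriv (fun r => u r x) s) t - lap (u t) x + V x * u t x
        + deriv (fun s => u s x) t = 0)
    (hinit0 : ∀ x, u 0 x = u₀ x)
    (hinit1 : ∀ x, deriv (fun s => u s x) 0 = u₁ x)
    (hsupp : ∀ T, 0 < T → ∃ R, 0 < R ∧ ∀ t ∈ Set.Icc (0:ℝ) T, ∀ x,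
      R ≤ ‖x‖ → u t x = 0)
    :
    ∀ t, 0 ≤ t →
      Real.sqrt (∫ x, (u t x) ^ 2) ≤
        2 * Real.sqrt (3 * energy V u 0 + (1/2) * (∫ x, (u₀ x) ^ 2) + ∫ x, u₁ x * u₀ x) ∧
      (∫ s in (0:ℝ)..t, energy V u s) ≤
        (3 * energy V u 0 + (1/2) * (∫ x, (u₀ x) ^ 2) + ∫ x, u₁ x * u₀ x)
          + energy V u 0 := by
  intro T hT
  set U : ℝ × EuclideanSpace ℝ (Fin n) → ℝ := fun p => u p.1 p.2 with hU
  set et : ℝ × EuclideanSpace ℝ (Fin n) := ((1 : ℝ), 0) with het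
  set es : Fin n → ℝ × EuclideanSpace ℝ (Fin n) :=
    fun i => ((0 : ℝ), EuclideanSpace.single i 1) with hes
  have hut := dir_smooth et hu
  have hutt := dir_smooth et hut
  have hui := fun i => dir_smooth (es i) hu
  have huti := fun i => dir_smooth et (hui i)
  have cu := hu.continuous
  have cut := hut.continuous
  have cutt := hutt.continuous
  have cui := fun i => (hui i).continuous
  have cuti := fun i => (huti i).continuous
  have d1 : ∀ t x, deriv (fun s => u s x) t = dir et U (t, x) :=
    fun t x => (dir_time hu t x).deriv
  have d2 : ∀ t x, deriv (fun s => deriv (fun r => u r x) s) t = dir et (dir et U) (t, x) := by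
    intro t x
    simp_rw [d1]
    exact (dir_time hut t x).deriv
  have d3 : ∀ t x, ‖gradient (u t) x‖ ^ 2 = ∑ i, (dir (es i) U (t, x)) ^ 2 := by
    intro t x
    rw [grad_sq]
    exact Finset.sum_congr rfl fun i _ => by rw [← dir_space hu t x]
  have d4 : ∀ t x, lap (u t) x = ∑ i, dir (es i) (dir (es i) U) (t, x) :=
    fun t x => lap_eq hu t x
  -- densities
  set e2 : ℝ → EuclideanSpace ℝ (Fin n) → ℝ := fun t x =>
    (dir et U (t, x)) ^ 2 + ∑ i, (dir (es i) U (t, x)) ^ 2 + V x * (U (t, x)) ^ 2 with he2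
  set Ps : ℝ → EuclideanSpace ℝ (Fin n) → ℝ := fun t x =>
    e2 t x + dir et U (t, x) * U (t, x) + (1/2) * (U (t, x)) ^ 2 with hPs
  set Ps' : ℝ → EuclideanSpace ℝ (Fin n) → ℝ := fun t x =>
    2 * dir et U (t, x) * dir et (dir et U) (t, x)
    + ∑ i, 2 * dir (es i) U (t, x) * dir et (dir (es i) U) (t, x)
    + V x * (2 * U (t, x) * dir et U (t, x))
    + (dir et (dir et U) (t, x) * U (t, x) + dir et U (t, x) * dir et U (t, x))
    + U (t, x) * dir et U (t, x) with hPs'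
  have hE : ∀ t, energy V u t = (1/2) * ∫ x, e2 t x := by
    intro t
    unfold energy
    simp_rw [d1, d3]
    rfl
  have ce2 : Continuous (Function.uncurry e2) := by
    simp only [he2, Function.uncurry_def]
    fun_prop
  have cPs : Continuous (Function.uncurry Ps) := by
    have : Continuous fun p : ℝ × EuclideanSpace ℝ (Fin n) => e2 p.1 p.2 := ce2
    simp only [hPs, Function.uncurry_def]
    fun_prop
  have cPs' : Continuous (Function.uncurry Ps') := by
    simp only [hPs', Function.uncurry_def]
    fun_prop
  have dPs : ∀ t x, HasDerivAt (fun s => Ps s x) (Ps' t x) t := by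
    intro t x
    have a := dir_time hu t x
    have b := dir_time hut t x
    have c := fun i => dir_time (hui i) t x
    have := ((((b.pow 2).add (HasDerivAt.fun_sum (u := Finset.univ)
      fun i _ => (c i).pow 2)).add ((a.pow 2).const_mul (V x))).add (b.mul a)).add
      ((a.pow 2).const_mul (1/2))
    convert! this using 1
    simp only [hPs', Nat.cast_ofNat, Nat.add_one_sub_one, pow_one]
    ring
  have e2nn : ∀ t x, 0 ≤ e2 t x := by
    intro t x
    have := hVnonneg x
    simp only [he2]
    positivity
  have Enn : ∀ t, 0 ≤ energy V u t := by
    intro t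
    rw [hE]
    have : 0 ≤ ∫ x, e2 t x := integral_nonneg (e2nn t)
    positivity
  -- supports
  obtain ⟨R, hR, hz⟩ := hsupp (T + 1) (by linarith)
  have hsub : ∀ t ∈ Set.Icc (0:ℝ) T, t ∈ Set.Icc (0:ℝ) (T + 1) :=
    fun t ht => ⟨ht.1, by linarith [ht.2]⟩
  have z0 : ∀ t ∈ Set.Icc (0:ℝ) T, ∀ x, R + 1 ≤ ‖x‖ → U (t, x) = 0 :=
    fun t ht x hx => hz t (hsub t ht) x (by linarith)
  have z1 : ∀ t ∈ Set.Icc (0:ℝ) T, ∀ x, R + 1 ≤ ‖x‖ → dir et U (t, x) = 0 := by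
    intro t ht x hx
    have h1 := (dir_time hu t x).hasDerivWithinAt (s := Set.Icc (0:ℝ) (T+1))
    have h2 : HasDerivWithinAt (fun s => U (s, x)) 0 (Set.Icc (0:ℝ) (T+1)) t :=
      (hasDerivWithinAt_const t _ (0:ℝ)).congr
        (fun s hs => hz s hs x (by linarith)) (hz t (hsub t ht) x (by linarith))
    exact (uniqueDiffOn_Icc (by linarith) t (hsub t ht)).eq_deriv _ h1 h2
  have z2 : ∀ t ∈ Set.Icc (0:ℝ) T, ∀ x, R + 1 ≤ ‖x‖ → ∀ i, dir (es i) U (t, x) = 0 := by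
    intro t ht x hx i
    have h0 : (fun y => U (t, y)) =ᶠ[nhds x] fun _ => (0:ℝ) := by
      have : ∀ᶠ y in nhds x, R < ‖y‖ :=
        continuous_norm.continuousAt.eventually (lt_mem_nhds (by linarith))
      filter_upwards [this] with y hy
      exact hz t (hsub t ht) y hy.le
    rw [← dir_space hu t x, h0.fderiv_eq]
    simp
  have ze : ∀ t ∈ Set.Icc (0:ℝ) T, ∀ x, R + 1 ≤ ‖x‖ → e2 t x = 0 := by
    intro t ht x hx
    simp [he2, z0 t ht x hx, z1 t ht x hx, z2 t ht x hx]
  have zP : ∀ t ∈ Set.Icc (0:ℝ) T, ∀ x, R + 1 ≤ ‖x‖ → Ps t x = 0 := by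
    intro t ht x hx
    simp [hPs, ze t ht x hx, z0 t ht x hx, z1 t ht x hx]
  have zP' : ∀ t ∈ Set.Icc (0:ℝ) T, ∀ x, R + 1 ≤ ‖x‖ → Ps' t x = 0 := by
    intro t ht x hx
    simp [hPs', z0 t ht x hx, z1 t ht x hx, z2 t ht x hx]
  have sl : ∀ {g : ℝ → EuclideanSpace ℝ (Fin n) → ℝ} (t : ℝ),
      Continuous (Function.uncurry g) → Continuous (g t) :=
    fun t hg => hg.comp (Continuous.prodMk_right t)
  have slU : ∀ {g : ℝ × EuclideanSpace ℝ (Fin n) → ℝ} (t : ℝ),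
      Continuous g → Continuous (fun x => g (t, x)) :=
    fun t hg => hg.comp (Continuous.prodMk_right t)
  have ie : ∀ t ∈ Set.Icc (0:ℝ) T, Integrable (e2 t) :=
    fun t ht => int_of_supp (sl t ce2) _ (ze t ht)
  have iP : ∀ t ∈ Set.Icc (0:ℝ) T, Integrable (Ps t) :=
    fun t ht => int_of_supp (sl t cPs) _ (zP t ht)
  have iP' : ∀ t ∈ Set.Icc (0:ℝ) T, Integrable (Ps' t) :=
    fun t ht => int_of_supp (sl t cPs') _ (zP' t ht)
  -- the key identity
  have key : ∀ t ∈ Set.Icc (0:ℝ) T, ∫ x, Ps' t x = - ∫ x, e2 t x := by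
    intro t ht
    have A := fun i => ibp2 (EuclideanSpace.single i 1) hu hut t (R + 1) (z1 t ht)
    have B := fun i => ibp2 (EuclideanSpace.single i 1) hu hu t (R + 1) (z0 t ht)
    have hs : ∫ x, (Ps' t x + e2 t x) = 0 := by
      have hpt : ∀ x, Ps' t x + e2 t x = ∑ i,
          (2 * (dir (es i) U (t, x) * dir (es i) (dir et U) (t, x)
            + dir (es i) (dir (es i) U) (t, x) * dir et U (t, x))
          + (dir (es i) U (t, x) * dir (es i) U (t, x)
            + dir (es i) (dir (es i) U) (t, x) * U (t, x))) := by
        intro x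
        have hp := hPDE t ht.1 x
        rw [d1, d2, d4] at hp
        have hp2 : dir et (dir et U) (t, x) = ∑ i, dir (es i) (dir (es i) U) (t, x)
            - V x * U (t, x) - dir et U (t, x) := by
          have : U (t, x) = u t x := rfl
          rw [this]; linarith
        have hc : ∀ i, dir et (dir (es i) U) (t, x) = dir (es i) (dir et U) (t, x) :=
          fun i => dir_comm _ _ hu _
        simp only [hPs', he2, hc, hp2, Finset.sum_add_distrib, ← Finset.mul_sum,
          ← Finset.sum_mul, mul_assoc, pow_two]
        ring
      simp_rw [hpt]
      rw [integral_finsetSum]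
      · refine Finset.sum_eq_zero fun i _ => ?_
        rw [integral_add ((A i).1.const_mul 2) (B i).1, integral_const_mul, (A i).2, (B i).2]
        simp
      · exact fun i _ => ((A i).1.const_mul 2).add (B i).1
    rw [integral_add (iP' t ht) (ie t ht)] at hs
    linarith
  set K := Metric.closedBall (0 : EuclideanSpace ℝ (Fin n)) (R + 1) with hK
  have hKc : IsCompact K := isCompact_closedBall _ _
  have main : (∫ x, Ps T x) - (∫ x, Ps 0 x) = - (2 * ∫ s in (0:ℝ)..T, energy V u s) := by
    have m0 : (0:ℝ) ∈ Set.Icc (0:ℝ) T := ⟨le_rfl, hT⟩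
    have m1 : T ∈ Set.Icc (0:ℝ) T := ⟨hT, le_rfl⟩
    have hcont : Continuous fun s => ∫ x in K, Ps' s x :=
      continuous_parametric_integral_of_continuous cPs' hKc
    have h1 := intervalIntegral.integral_eq_sub_of_hasDerivAt (a := 0) (b := T)
      (fun t _ => aux_param volume K hKc Ps Ps' cPs cPs' dPs t)
      (hcont.intervalIntegrable _ _)
    rw [set_of_supp (R + 1) (zP T m1), set_of_supp (R + 1) (zP 0 m0)] at h1
    rw [← h1, ← intervalIntegral.integral_const_mul, ← intervalIntegral.integral_neg]
    refine intervalIntegral.integral_congr fun s hs => ?_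
    rw [Set.uIcc_of_le hT] at hs
    rw [set_of_supp (R + 1) (zP' s hs), key s hs, hE]
    ring
  have hI0 : ∫ x, Ps 0 x = 2 * energy V u 0 + (∫ x, u₁ x * u₀ x)
      + (1/2) * ∫ x, (u₀ x) ^ 2 := by
    have m0 : (0:ℝ) ∈ Set.Icc (0:ℝ) T := ⟨le_rfl, hT⟩
    have q0 : ∀ x, U (0, x) = u₀ x := hinit0
    have q1 : ∀ x, dir et U (0, x) = u₁ x := fun x => by rw [← d1, hinit1]
    have j1 : Integrable fun x => u₁ x * u₀ x :=
      (hu₁smooth.continuous.mul hu₀smooth.continuous).integrable_of_hasCompactSupport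
        hu₀supp.mul_left
    have j2 : Integrable fun x => (1/2 : ℝ) * (u₀ x) ^ 2 := by
      refine Integrable.const_mul ?_ _
      simp_rw [pow_two]
      exact (hu₀smooth.continuous.mul hu₀smooth.continuous).integrable_of_hasCompactSupport
        hu₀supp.mul_left
    have : ∀ x, Ps 0 x = e2 0 x + u₁ x * u₀ x + (1/2) * (u₀ x) ^ 2 := fun x => by
      simp only [hPs, q0, q1]
    simp_rw [this]
    rw [integral_add (f := fun x => e2 0 x + u₁ x * u₀ x) ((ie 0 m0).add j1) j2, integral_add (ie 0 m0) j1, integral_const_mul, hE]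
    ring
  have m1 : T ∈ Set.Icc (0:ℝ) T := ⟨hT, le_rfl⟩
  have low : (1/4) * ∫ x, (u T x) ^ 2 ≤ ∫ x, Ps T x := by
    rw [← integral_const_mul]
    refine integral_mono ?_ (iP T m1) fun x => ?_
    · refine int_of_supp (((slU T cu).pow 2).const_mul _) (R + 1) fun x hx => ?_
      have := z0 T m1 x hx
      simp only [hU] at this
      simp [this]
    · have h1 := hVnonneg x
      have h2 : 0 ≤ ∑ i, (dir (es i) U (T, x)) ^ 2 := Finset.sum_nonneg fun i _ => sq_nonneg _
      have h3 : 0 ≤ V x * (U (T, x)) ^ 2 := by positivity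
      have h4 : u T x = U (T, x) := rfl
      simp only [hPs, he2, h4]
      nlinarith [sq_nonneg (dir et U (T, x) + U (T, x) / 2)]
  have hEi : 0 ≤ ∫ s in (0:ℝ)..T, energy V u s :=
    intervalIntegral.integral_nonneg hT fun s _ => Enn s
  have hN : 0 ≤ ∫ x, (u T x) ^ 2 := integral_nonneg fun x => sq_nonneg _
  have hE0 := Enn 0
  constructor
  · rw [Real.sqrt_le_iff]
    refine ⟨by positivity, ?_⟩
    rw [mul_pow, Real.sq_sqrt (by linarith)]
    linarith
  · linarith
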